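/- The transition kernels f⁽¹'²⁾ of the 1/2-stable Biane process satisfy the Chapman–Kolmogorov equation: for 0 < t₁ < t₂ < t₃, y₁ > t₁²/4 and y₃ > t₃²/4, ∫_{t₂²/4}^∞ f⁽¹'²⁾_{t₁,t₂}(y₁,y₂) f⁽¹'²⁾_{t₂,t₃}(y₂,y₃) dy₂ = f⁽¹'²⁾_{t₁,t₃}(y₁,y₃). -/

import Mathlib

/-- Transition density f⁽¹ᐟ²⁾_{s,t}(u,v) of the 1/2-stable Biane process. -/
noncomputable def fHalf (s t u v : ℝ) : ℝ :=
  (t-s) * Real.sqrt (4*v - t^2) / (2*Real.pi * ((v-u)^2 - (t-s)*(s*v - t*u)))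

/-! In the coordinates `u = s² / 4 + a²`, `v = t² / 4 + b²` with `a, b > 0`, the denominator of
`fHalf s t u v` factors as `2π ((b - a)² + γ²) ((b + a)² + γ²)` with `γ = (t - s) / 2`. Hence, with
respect to `db`, the kernel is `(b / a) (C_γ(b - a) - C_γ(b + a))`, where `C_γ` is the Cauchy
density of scale `γ`. The factors `b / a` telescope under composition, so Chapman–Kolmogorov reduces
to the convolution semigroup law `C_γ ∗ C_δ = C_(γ + δ)`, restricted to odd functions. The semigroup
law itself is immediate on the Fourier side, where `C_γ` becomes `ξ ↦ exp (-2πγ|ξ|)`. -/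

open MeasureTheory ProbabilityTheory Set
open scoped FourierTransform NNReal Real

section Integration

variable {E : Type*} [NormedAddCommGroup E] [NormedSpace ℝ E]

lemma integral_Ioi_add_comp_neg {f : ℝ → E} (hf : Integrable f) :
    ∫ x in Ioi (0 : ℝ), (f x + f (-x)) = ∫ x, f x := by
  rw [integral_add hf.integrableOn hf.comp_neg.integrableOn, integral_comp_neg_Ioi, neg_zero,
    add_comm, intervalIntegral.integral_Iic_add_Ioi hf.integrableOn hf.integrableOn]

lemma integral_Ioi_eq_integral_comp_add_sq (r : ℝ) (g : ℝ → E) :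
    ∫ y in Ioi r, g y = ∫ x in Ioi (0 : ℝ), (2 * x) • g (r + x ^ 2) := by
  have translate : ∫ y in Ioi r, g y = ∫ z in Ioi (0 : ℝ), g (r + z) := by
    simpa using ((measurePreserving_add_left volume r).setIntegral_preimage_emb
      (measurableEmbedding_addLeft r) g (Ioi r)).symm
  rw [translate, ← integral_comp_rpow_Ioi_of_pos two_pos]
  norm_num

lemma integral_fourier_smul_eq_integral_smul_fourier {V F : Type*} [NormedAddCommGroup V]
    [InnerProductSpace ℝ V] [FiniteDimensional ℝ V] [MeasurableSpace V] [BorelSpace V]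
    [NormedAddCommGroup F] [NormedSpace ℂ F] [CompleteSpace F] {f : V → ℂ} {g : V → F}
    (hf : Integrable f) (hg : Integrable g) : ∫ x, 𝓕 f x • g x = ∫ ξ, f ξ • 𝓕 g ξ := by
  simpa using! VectorFourier.integral_fourierIntegral_smul_eq_flip (L := innerₗ V)
    Real.continuous_fourierChar continuous_inner hf hg

end Integration

section CauchySemigroup

/-- The characteristic function of the Cauchy law with location `a` and scale `γ`, evaluated at
`2πξ` to match the normalization of `𝓕`. -/
noncomputable def cauchyChar (a : ℝ) (γ : ℝ≥0) (ξ : ℝ) : ℂ :=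
  Complex.exp (2 * π * (a * ξ * Complex.I - γ * |ξ|))

lemma continuous_cauchyChar (a : ℝ) (γ : ℝ≥0) : Continuous (cauchyChar a γ) := by
  unfold cauchyChar
  fun_prop

lemma cauchyChar_mul_cauchyChar (a b : ℝ) (γ δ : ℝ≥0) (ξ : ℝ) :
    cauchyChar a γ ξ * cauchyChar b δ ξ = cauchyChar (a + b) (γ + δ) ξ := by
  simp only [cauchyChar, ← Complex.exp_add]
  push_cast
  ring_nf

lemma cauchyChar_neg (a : ℝ) (γ : ℝ≥0) (ξ : ℝ) : cauchyChar a γ (-ξ) = cauchyChar (-a) γ ξ := by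
  simp [cauchyChar]

lemma eqOn_cauchyChar_Ioi (a : ℝ) (γ : ℝ≥0) :
    EqOn (cauchyChar a γ) (fun ξ ↦ Complex.exp (2 * π * (a * Complex.I - γ) * ξ)) (Ioi 0) := by
  intro ξ hξ
  simp only [cauchyChar, abs_of_pos (mem_Ioi.mp hξ)]
  ring_nf

lemma eqOn_cauchyChar_Iic (a : ℝ) (γ : ℝ≥0) :
    EqOn (cauchyChar a γ) (fun ξ ↦ Complex.exp (2 * π * (a * Complex.I + γ) * ξ)) (Iic 0) := by
  intro ξ hξ
  simp only [cauchyChar, abs_of_nonpos (mem_Iic.mp hξ)]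
  push_cast
  ring_nf

variable {γ δ : ℝ≥0}

lemma re_two_pi_mul_mul_I_add_pos (hγ : γ ≠ 0) (a : ℝ) :
    0 < (2 * π * (a * Complex.I + γ) : ℂ).re := by
  have hre : (2 * π * (a * Complex.I + γ) : ℂ).re = 2 * π * γ := by simp
  rw [hre]
  positivity

lemma re_two_pi_mul_mul_I_sub_neg (hγ : γ ≠ 0) (a : ℝ) :
    (2 * π * (a * Complex.I - γ) : ℂ).re < 0 := by
  have hre : (2 * π * (a * Complex.I - γ) : ℂ).re = -(2 * π * γ) := by simp
  rw [hre, neg_lt_zero]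
  positivity

lemma integrable_cauchyChar (hγ : γ ≠ 0) (a : ℝ) : Integrable (cauchyChar a γ) := by
  rw [← integrableOn_univ, ← Iic_union_Ioi (a := (0 : ℝ))]
  exact .union
    ((integrableOn_exp_mul_complex_Iic (re_two_pi_mul_mul_I_add_pos hγ a) 0).congr_fun
      (eqOn_cauchyChar_Iic a γ).symm measurableSet_Iic)
    ((integrableOn_exp_mul_complex_Ioi (re_two_pi_mul_mul_I_sub_neg hγ a) 0).congr_fun
      (eqOn_cauchyChar_Ioi a γ).symm measurableSet_Ioi)

lemma integral_cauchyChar (hγ : γ ≠ 0) (a : ℝ) :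
    ∫ ξ, cauchyChar a γ ξ = cauchyPDFReal a γ 0 := by
  have hpos := re_two_pi_mul_mul_I_add_pos hγ a
  have hneg := re_two_pi_mul_mul_I_sub_neg hγ a
  have left : ∫ ξ in Iic (0 : ℝ), cauchyChar a γ ξ = 1 / (2 * π * (a * Complex.I + γ)) := by
    rw [setIntegral_congr_fun measurableSet_Iic (eqOn_cauchyChar_Iic a γ),
      integral_exp_mul_complex_Iic hpos, Complex.ofReal_zero, mul_zero, Complex.exp_zero]
  have right : ∫ ξ in Ioi (0 : ℝ), cauchyChar a γ ξ = -1 / (2 * π * (a * Complex.I - γ)) := by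
    rw [setIntegral_congr_fun measurableSet_Ioi (eqOn_cauchyChar_Ioi a γ),
      integral_exp_mul_complex_Ioi hneg, Complex.ofReal_zero, mul_zero, Complex.exp_zero]
  have hadd : (a * Complex.I + γ : ℂ) ≠ 0 := fun h ↦ by simp [h] at hpos
  have hsub : (a * Complex.I - γ : ℂ) ≠ 0 := fun h ↦ by simp [h] at hneg
  have factor : ((0 - a) ^ 2 + γ ^ 2 : ℂ) =
      -((a * Complex.I + γ) * (a * Complex.I - γ)) := by
    linear_combination (a : ℂ) ^ 2 * Complex.I_sq
  rw [← intervalIntegral.integral_Iic_add_Ioi (integrable_cauchyChar hγ a).integrableOn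
    (integrable_cauchyChar hγ a).integrableOn, left, right, cauchyPDFReal_def]
  push_cast
  rw [factor]
  field_simp
  ring

lemma cauchyPDFReal_sub_zero (a x : ℝ) (γ : ℝ≥0) :
    cauchyPDFReal (a - x) γ 0 = cauchyPDFReal a γ x := by
  simp only [cauchyPDFReal_def]
  ring_nf

lemma fourier_cauchyChar (hγ : γ ≠ 0) (a : ℝ) :
    𝓕 (cauchyChar a γ) = fun x ↦ (cauchyPDFReal a γ x : ℂ) := by
  ext x
  have modulate (ξ : ℝ) :
      Complex.exp (↑(-2 * π * ξ * x) * Complex.I) • cauchyChar a γ ξ = cauchyChar (a - x) γ ξ := by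
    rw [smul_eq_mul, cauchyChar, cauchyChar, ← Complex.exp_add]
    push_cast
    ring_nf
  simp only [Real.fourier_real_eq_integral_exp_smul, modulate, integral_cauchyChar hγ,
    cauchyPDFReal_sub_zero]

lemma fourier_cauchyPDFReal (hγ : γ ≠ 0) (a : ℝ) :
    𝓕 (fun x ↦ (cauchyPDFReal a γ x : ℂ)) = cauchyChar (-a) γ := by
  have inversion : 𝓕⁻ (𝓕 (cauchyChar a γ)) = cauchyChar a γ :=
    (continuous_cauchyChar a γ).fourierInv_fourier_eq (integrable_cauchyChar hγ a)
      (fourier_cauchyChar hγ a ▸ (integrable_cauchyPDFReal a).ofReal)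
  ext ξ
  rw [← cauchyChar_neg, ← inversion, Real.fourierInv_eq_fourier_neg, neg_neg,
    fourier_cauchyChar hγ]

lemma integral_cauchyPDFReal_mul (hγ : γ ≠ 0) (hδ : δ ≠ 0) (a b : ℝ) :
    ∫ x, cauchyPDFReal a γ x * cauchyPDFReal b δ x = cauchyPDFReal a (γ + δ) b := by
  have hγδ : γ + δ ≠ 0 := by positivity
  have h : ∫ x, (cauchyPDFReal a γ x : ℂ) * cauchyPDFReal b δ x = cauchyPDFReal a (γ + δ) b := by
    calc ∫ x, (cauchyPDFReal a γ x : ℂ) * cauchyPDFReal b δ x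
      _ = ∫ x, 𝓕 (cauchyChar a γ) x * cauchyPDFReal b δ x := by rw [fourier_cauchyChar hγ]
      _ = ∫ ξ, cauchyChar a γ ξ * 𝓕 (fun x ↦ (cauchyPDFReal b δ x : ℂ)) ξ :=
        integral_fourier_smul_eq_integral_smul_fourier (integrable_cauchyChar hγ a)
          (integrable_cauchyPDFReal b).ofReal
      _ = ∫ ξ, cauchyChar (a - b) (γ + δ) ξ := by
        simp only [fourier_cauchyPDFReal hδ, cauchyChar_mul_cauchyChar, sub_eq_add_neg]
      _ = cauchyPDFReal a (γ + δ) b := by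
        rw [integral_cauchyChar hγδ, cauchyPDFReal_sub_zero]
  exact_mod_cast h

lemma integrable_cauchyPDFReal_mul (hγ : γ ≠ 0) (hδ : δ ≠ 0) (a b : ℝ) :
    Integrable fun x ↦ cauchyPDFReal a γ x * cauchyPDFReal b δ x := by
  refine .of_integral_ne_zero ?_
  rw [integral_cauchyPDFReal_mul hγ hδ]
  exact (cauchyPDF_pos a (by positivity) b).ne'

end CauchySemigroup

section OddCauchyKernel

/-- The kernel on `(0, ∞)` by which convolution with the Cauchy density of scale `γ` acts on odd
functions. -/
noncomputable def oddCauchyKernel (γ : ℝ≥0) (a x : ℝ) : ℝ :=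
  cauchyPDFReal a γ x - cauchyPDFReal (-a) γ x

lemma cauchyPDFReal_neg_right (a : ℝ) (γ : ℝ≥0) (x : ℝ) :
    cauchyPDFReal a γ (-x) = cauchyPDFReal (-a) γ x := by
  simp only [cauchyPDFReal_def]
  ring_nf

lemma oddCauchyKernel_neg_left (γ : ℝ≥0) (a x : ℝ) :
    oddCauchyKernel γ (-a) x = -oddCauchyKernel γ a x := by
  simp [oddCauchyKernel]

lemma oddCauchyKernel_comm (γ : ℝ≥0) (a x : ℝ) :
    oddCauchyKernel γ a x = oddCauchyKernel γ x a := by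
  simp only [oddCauchyKernel, cauchyPDFReal_def]
  ring_nf

lemma integral_Ioi_oddCauchyKernel_mul {γ δ : ℝ≥0} (hγ : γ ≠ 0) (hδ : δ ≠ 0) (a b : ℝ) :
    ∫ x in Ioi (0 : ℝ), oddCauchyKernel γ a x * oddCauchyKernel δ x b =
      oddCauchyKernel (γ + δ) a b := by
  have expand (x : ℝ) : cauchyPDFReal a γ x * oddCauchyKernel δ x b =
      cauchyPDFReal a γ x * cauchyPDFReal b δ x - cauchyPDFReal a γ x * cauchyPDFReal (-b) δ x := by
    rw [oddCauchyKernel_comm, oddCauchyKernel, mul_sub]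
  have fold (x : ℝ) : oddCauchyKernel γ a x * oddCauchyKernel δ x b =
      cauchyPDFReal a γ x * oddCauchyKernel δ x b +
        cauchyPDFReal a γ (-x) * oddCauchyKernel δ (-x) b := by
    rw [oddCauchyKernel_neg_left, cauchyPDFReal_neg_right, oddCauchyKernel]
    ring
  have integrable_pos := integrable_cauchyPDFReal_mul hγ hδ a b
  have integrable_neg := integrable_cauchyPDFReal_mul hγ hδ a (-b)
  calc ∫ x in Ioi (0 : ℝ), oddCauchyKernel γ a x * oddCauchyKernel δ x b
    _ = ∫ x in Ioi (0 : ℝ), (cauchyPDFReal a γ x * oddCauchyKernel δ x b +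
          cauchyPDFReal a γ (-x) * oddCauchyKernel δ (-x) b) := by
      simp_rw [fold]
    _ = ∫ x, cauchyPDFReal a γ x * oddCauchyKernel δ x b :=
      integral_Ioi_add_comp_neg (f := fun x ↦ cauchyPDFReal a γ x * oddCauchyKernel δ x b)
        (by simpa only [expand] using! integrable_pos.sub integrable_neg)
    _ = oddCauchyKernel (γ + δ) a b := by
      simp_rw [expand]
      rw [integral_sub integrable_pos integrable_neg, integral_cauchyPDFReal_mul hγ hδ,
        integral_cauchyPDFReal_mul hγ hδ, oddCauchyKernel, cauchyPDFReal_neg_right]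

end OddCauchyKernel

lemma fHalf_add_sq {s t a b : ℝ} (hst : s < t) (ha : a ≠ 0) (hb : 0 ≤ b) :
    fHalf s t (s ^ 2 / 4 + a ^ 2) (t ^ 2 / 4 + b ^ 2) =
      oddCauchyKernel ((t - s) / 2).toNNReal a b / (2 * a) := by
  obtain ⟨γ, hγ, rfl⟩ : ∃ γ > 0, t = s + 2 * γ := ⟨(t - s) / 2, by linarith, by ring⟩
  have sqrt_eq : √(4 * ((s + 2 * γ) ^ 2 / 4 + b ^ 2) - (s + 2 * γ) ^ 2) = 2 * b := by
    rw [show 4 * ((s + 2 * γ) ^ 2 / 4 + b ^ 2) - (s + 2 * γ) ^ 2 = (2 * b) ^ 2 by ring,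
      Real.sqrt_sq (by positivity)]
  have denom_eq : ((s + 2 * γ) ^ 2 / 4 + b ^ 2 - (s ^ 2 / 4 + a ^ 2)) ^ 2 -
      (s + 2 * γ - s) * (s * ((s + 2 * γ) ^ 2 / 4 + b ^ 2) - (s + 2 * γ) * (s ^ 2 / 4 + a ^ 2)) =
      ((b - a) ^ 2 + γ ^ 2) * ((b + a) ^ 2 + γ ^ 2) := by ring
  have coe_scale : (((s + 2 * γ - s) / 2).toNNReal : ℝ) = γ := by
    rw [show (s + 2 * γ - s) / 2 = γ by ring, Real.coe_toNNReal γ hγ.le]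
  rw [fHalf, sqrt_eq, denom_eq, oddCauchyKernel, cauchyPDFReal_def, cauchyPDFReal_def, coe_scale,
    sub_neg_eq_add]
  have hsub : (b - a) ^ 2 + γ ^ 2 ≠ 0 := by positivity
  have hadd : (b + a) ^ 2 + γ ^ 2 ≠ 0 := by positivity
  field_simp
  ring

lemma exists_pos_add_sq_eq {r y : ℝ} (h : r < y) : ∃ a > 0, r + a ^ 2 = y :=
  ⟨√(y - r), Real.sqrt_pos.mpr (sub_pos.mpr h), by
    rw [Real.sq_sqrt (sub_pos.mpr h).le, add_sub_cancel]⟩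

theorem stmt17_general {t₁ t₂ t₃ y₁ y₃ : ℝ} (h12 : t₁ < t₂) (h23 : t₂ < t₃)
    (hy₁ : t₁ ^ 2 / 4 < y₁) (hy₃ : t₃ ^ 2 / 4 < y₃) :
    ∫ y₂ in Ioi (t₂ ^ 2 / 4), fHalf t₁ t₂ y₁ y₂ * fHalf t₂ t₃ y₂ y₃ = fHalf t₁ t₃ y₁ y₃ := by
  obtain ⟨a, ha, rfl⟩ := exists_pos_add_sq_eq hy₁
  obtain ⟨b, hb, rfl⟩ := exists_pos_add_sq_eq hy₃
  have hγ : 0 < (t₂ - t₁) / 2 := by linarith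
  have hδ : 0 < (t₃ - t₂) / 2 := by linarith
  have hγδ : ((t₃ - t₁) / 2).toNNReal = ((t₂ - t₁) / 2).toNNReal + ((t₃ - t₂) / 2).toNNReal := by
    rw [← Real.toNNReal_add hγ.le hδ.le]
    ring_nf
  rw [integral_Ioi_eq_integral_comp_add_sq, fHalf_add_sq (h12.trans h23) ha.ne' hb.le, hγδ,
    ← integral_Ioi_oddCauchyKernel_mul (Real.toNNReal_pos.mpr hγ).ne'
      (Real.toNNReal_pos.mpr hδ).ne', ← integral_div]
  refine setIntegral_congr_fun measurableSet_Ioi fun x (hx : 0 < x) ↦ ?_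
  simp only [fHalf_add_sq h12 ha.ne' hx.le, fHalf_add_sq h23 hx.ne' hb.le, smul_eq_mul]
  field_simp

theorem stmt17 (t₁ t₂ t₃ : ℝ) (ht₁ : 0 < t₁) (h12 : t₁ < t₂) (h23 : t₂ < t₃)
    (y₁ y₃ : ℝ) (hy₁ : t₁^2/4 < y₁) (hy₃ : t₃^2/4 < y₃) :
    ∫ y₂ in Set.Ioi (t₂^2/4), fHalf t₁ t₂ y₁ y₂ * fHalf t₂ t₃ y₂ y₃
      = fHalf t₁ t₃ y₁ y₃ :=
  stmt17_general h12 h23 hy₁ hy₃
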